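/- arXiv:2508.01238 — 2 statements merged into one kernel-verified Lean document; each statement's English description precedes it below -/
import Mathlib

section
/- Edge trace identity for the linearized Cotton–York operator: for every C^∞ matrix field τ : ℝ³ → ℝ^{3×3} with symmetric values and every choice of pairwise orthogonal unit vectors t, m, n ∈ ℝ³ with t' := n × m, the identity ∂_t(tᵀ (tr2cott(τ)) m) + mᵀ (div_f(tr2cott(τ))) = m · tre2(τ) + ∂_t ∂_t (t'ᵀ τ n) holds at every point of ℝ³. -/
noncomputable section

open Matrix

/-- Vectors in ℝ³. -/
abbrev V3 := Fin 3 → ℝ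
/-- 3×3 real matrices. -/
abbrev M3 := Matrix (Fin 3) (Fin 3) ℝ

/-- Partial derivative ∂ᵢ of a scalar field. -/
def pd (i : Fin 3) (f : V3 → ℝ) : V3 → ℝ :=
  fun x => fderiv ℝ f x (Pi.single i 1)

/-- Gradient matrix of a vector field: (grad v)_{ij} = ∂ⱼ vᵢ. -/
def vgrad (v : V3 → V3) : V3 → M3 :=
  fun x => Matrix.of fun i j => pd j (fun y => v y i) x

/-- Divergence of a vector field. -/
def vdiv (v : V3 → V3) : V3 → ℝ :=
  fun x => ∑ i, pd i (fun y => v y i) x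

/-- Cross product on ℝ³. -/
def cross (a b : V3) : V3 :=
  fun i => a (i + 1) * b (i + 2) - a (i + 2) * b (i + 1)

/-- Curl of a vector field. -/
def vcurl (v : V3 → V3) : V3 → V3 :=
  fun x i => pd (i + 1) (fun y => v y (i + 2)) x - pd (i + 2) (fun y => v y (i + 1)) x

/-- Row-wise curl of a matrix field. -/
def mcurl (τ : V3 → M3) : V3 → M3 :=
  fun x => Matrix.of fun i j =>
    pd (j + 1) (fun y => τ y i (j + 2)) x - pd (j + 2) (fun y => τ y i (j + 1)) x

/-- Row-wise divergence of a matrix field. -/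
def mdiv (τ : V3 → M3) : V3 → V3 :=
  fun x i => ∑ j, pd j (fun y => τ y i j) x

/-- Symmetric part of a matrix. -/
def msym (A : M3) : M3 := (1 / 2 : ℝ) • (A + Aᵀ)

/-- Deviatoric (trace-free) part of a matrix. -/
def devm (A : M3) : M3 := A - ((1 / 3 : ℝ) * A.trace) • (1 : M3)

/-- The skew-symmetric matrix associated to a vector: mskw(ω) y = ω × y. -/
def mskw (w : V3) : M3 := !![0, -w 2, w 1; w 2, 0, -w 0; -w 1, w 0, 0]

/-- vskw(A) := mskw⁻¹(skw A). -/
def vskw (A : M3) : V3 :=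
  (1 / 2 : ℝ) • ![A 2 1 - A 1 2, A 0 2 - A 2 0, A 1 0 - A 0 1]

/-- S⁻¹(A) := Aᵀ − (1/2)(tr A)I. -/
def Sinv (A : M3) : M3 := Aᵀ - ((1 / 2 : ℝ) * A.trace) • (1 : M3)

/-- S(A) := Aᵀ − (tr A)I. -/
def Sop (A : M3) : M3 := Aᵀ - A.trace • (1 : M3)

/-- Incompatibility operator inc τ := curl (S⁻¹ (curl τ)). -/
def inc (τ : V3 → M3) : V3 → M3 := mcurl fun x => Sinv (mcurl τ x)

/-- Linearized Cotton–York operator cott τ := curl (S⁻¹ (inc τ)). -/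
def cott (τ : V3 → M3) : V3 → M3 := mcurl fun x => Sinv (inc τ x)

/-- Hessian matrix of a scalar field. -/
def hess (u : V3 → ℝ) : V3 → M3 :=
  fun x => Matrix.of fun i j => pd i (pd j u) x

/-- Euclidean dot product on ℝ³. -/
def dotp (a b : V3) : ℝ := ∑ i, a i * b i

/-- Smoothness of a vector field (componentwise C^∞). -/
def SmoothV (v : V3 → V3) : Prop := ∀ i, ContDiff ℝ (⊤ : ℕ∞) fun x => v x i

/-- Smoothness of a matrix field (entrywise C^∞). -/
def SmoothM (τ : V3 → M3) : Prop := ∀ i j, ContDiff ℝ (⊤ : ℕ∞) fun x => τ x i j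

/-- Conformal Killing fields. -/
def CK (v : V3 → V3) : Prop :=
  ∃ (a c d : V3) (b : ℝ), ∀ x,
    v x = dotp x x • a - (2 * dotp a x) • x + b • x + cross c x + d

/-- Rigid motions. -/
def RM (v : V3 → V3) : Prop := ∃ a b : V3, ∀ x, v x = cross a x + b

/-- Lowest-order Raviart–Thomas fields. -/
def RT (v : V3 → V3) : Prop := ∃ (a : V3) (b : ℝ), ∀ x, v x = a + b • x

/-- Polynomial scalar functions of total degree at most k. -/
def PolyLe (k : ℕ) (f : V3 → ℝ) : Prop :=
  ∃ p : MvPolynomial (Fin 3) ℝ, p.totalDegree ≤ k ∧ ∀ x, f x = MvPolynomial.eval x p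

/-- Matrix fields with entries in P_k and values symmetric traceless. -/
def PolyLeST (k : ℕ) (τ : V3 → M3) : Prop :=
  (∀ i j, PolyLe k fun x => τ x i j) ∧ (∀ x, (τ x)ᵀ = τ x) ∧ ∀ x, (τ x).trace = 0


/-- Directional derivative of a scalar field along a fixed vector w. -/
def pdir (w : V3) (f : V3 → ℝ) : V3 → ℝ := fun x => fderiv ℝ f x w

/-- Entrywise directional derivative of a vector field. -/
def pdirV (w : V3) (v : V3 → V3) : V3 → V3 := fun x i => pdir w (fun y => v y i) x

/-- Entrywise directional derivative of a matrix field. -/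
def pdirM (w : V3) (A : V3 → M3) : V3 → M3 :=
  fun x => Matrix.of fun i j => pdir w (fun y => A y i j) x

/-- Column-wise curl ∇ × A: the j-th column is the curl of the j-th column of A. -/
def colcurl (A : V3 → M3) : V3 → M3 :=
  fun x => Matrix.of fun i j =>
    pd (i + 1) (fun y => A y (i + 2) j) x - pd (i + 2) (fun y => A y (i + 1) j) x

/-- Gradient of a scalar field as a vector field. -/
def gradS (f : V3 → ℝ) : V3 → V3 := fun x i => pd i f x

/-- Projection matrix Π := I − n nᵀ. -/
def Pm (n : V3) : M3 := 1 - Matrix.vecMulVec n n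

/-- Row-wise cross product of a matrix with a vector. -/
def mcrossv (A : M3) (w : V3) : M3 := Matrix.of fun i => cross (A i) w

/-- Surface gradient grad_f w := (grad w) Π. -/
def gradf (n : V3) (w : V3 → V3) : V3 → M3 := fun x => vgrad w x * Pm n

/-- Surface deformation def_f w := sym (grad_f w). -/
def deff (n : V3) (w : V3 → V3) : V3 → M3 := fun x => msym (gradf n w x)

/-- Surface divergence of a matrix field: div_f A := (∂_t A) t + (∂_m A) m. -/
def divfM (t m : V3) (A : V3 → M3) : V3 → V3 :=
  fun x => (pdirM t A x).mulVec t + (pdirM m A x).mulVec m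

/-- Surface divergence of a vector field: div_f w := t·∂_t w + m·∂_m w. -/
def divfV (t m : V3) (w : V3 → V3) : V3 → ℝ :=
  fun x => dotp t (pdirV t w x) + dotp m (pdirV m w x)

/-- Surface deviatoric part dev_f A := ΠAΠ − (1/2) tr(ΠAΠ) Π. -/
def devf (n : V3) (A : M3) : M3 :=
  Pm n * A * Pm n - ((1 / 2 : ℝ) * (Pm n * A * Pm n).trace) • Pm n

/-- tr2inc(τ) := 2 def_f(Πτn) − Π(∂_n τ)Π. -/
def tr2inc (n : V3) (τ : V3 → M3) : V3 → M3 :=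
  fun x => (2 : ℝ) • deff n (fun y => (Pm n * τ y).mulVec n) x - Pm n * pdirM n τ x * Pm n

/-- tr1cott(τ) := sym((Πτ) × n). -/
def tr1cott (n : V3) (τ : V3 → M3) : V3 → M3 :=
  fun x => msym (mcrossv (Pm n * τ x) n)

/-- tr2cott(τ) := sym(tr2inc(τ) × n). -/
def tr2cott (n : V3) (τ : V3 → M3) : V3 → M3 :=
  fun x => msym (mcrossv (tr2inc n τ x) n)

/-- tr3cott(τ) := dev_f(tr2inc(sym curl τ)). -/
def tr3cott (n : V3) (τ : V3 → M3) : V3 → M3 :=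
  fun x => devf n (tr2inc n (fun y => msym (mcurl τ y)) x)

/-- tre2(τ) := 2(∂_t(sym curl τ))t − ∇(tᵀ(curl τ)t). -/
def tre2 (t : V3) (τ : V3 → M3) : V3 → V3 :=
  fun x => (2 : ℝ) • (pdirM t (fun y => msym (mcurl τ y)) x).mulVec t
    - gradS (fun y => dotp t ((mcurl τ y).mulVec t)) x

/-- tre3(τ) := −tᵀ(∇ × (sym curl τ))t − (1/2)∂_t(t·div τ). -/
def tre3 (t : V3) (τ : V3 → M3) : V3 → ℝ :=
  fun x => -dotp t ((colcurl (fun y => msym (mcurl τ y)) x).mulVec t)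
    - (1 / 2 : ℝ) * pdir t (fun y => dotp t (mdiv τ y)) x

/-- Bilinear evaluation of a matrix field. -/
def Fb (τ : V3 → M3) (a b : V3) : V3 → ℝ := fun y => dotp a ((τ y).mulVec b)

/-- Pointwise differentiability of all entries. -/
def DiffM (τ : V3 → M3) : Prop := ∀ i j, Differentiable ℝ fun x => τ x i j

theorem pdir_eq_sum (w : V3) (f : V3 → ℝ) (x : V3) :
    pdir w f x = ∑ k, w k * pd k f x := by
  unfold pdir pd
  have h : w = ∑ k, w k • (Pi.single k (1 : ℝ) : V3) := by
    funext i
    simp [Finset.sum_apply, Pi.single_apply]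
  conv_lhs => rw [h]
  simp [map_sum, map_smul]

theorem pdir_sub {w : V3} {f g : V3 → ℝ} (hf : Differentiable ℝ f) (hg : Differentiable ℝ g)
    (x : V3) : pdir w (fun y => f y - g y) x = pdir w f x - pdir w g x := by
  unfold pdir
  rw [fderiv_fun_sub (hf x) (hg x)]; rfl

theorem pdir_add {w : V3} {f g : V3 → ℝ} (hf : Differentiable ℝ f) (hg : Differentiable ℝ g)
    (x : V3) : pdir w (fun y => f y + g y) x = pdir w f x + pdir w g x := by
  unfold pdir
  rw [fderiv_fun_add (hf x) (hg x)]; rfl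

theorem pdir_cmul {w : V3} {f : V3 → ℝ} (c : ℝ) (hf : Differentiable ℝ f)
    (x : V3) : pdir w (fun y => c * f y) x = c * pdir w f x := by
  unfold pdir
  rw [fderiv_const_mul (hf x)]; rfl

theorem pdir_lin (w a : V3) (v : V3 → V3) (hv : ∀ i, Differentiable ℝ fun y => v y i) (x : V3) :
    pdir w (fun y => dotp a (v y)) x = ∑ i, a i * pdir w (fun y => v y i) x := by
  unfold pdir dotp
  rw [fderiv_fun_sum (fun i _ => ((hv i) x).const_mul (a i))]
  rw [_root_.sum_apply]
  refine Finset.sum_congr rfl fun i _ => ?_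
  rw [fderiv_const_mul ((hv i) x)]; rfl

theorem DiffM.mulVec {A : V3 → M3} (hA : DiffM A) (b : V3) (i : Fin 3) :
    Differentiable ℝ fun y => (A y).mulVec b i := by
  have := hA i
  simp only [Matrix.mulVec, dotProduct]
  fun_prop

theorem dotp_pdirM (w a b : V3) (A : V3 → M3) (hA : DiffM A) (x : V3) :
    dotp a ((pdirM w A x).mulVec b) = pdir w (Fb A a b) x := by
  unfold Fb
  rw [pdir_lin w a (fun y => (A y).mulVec b) (hA.mulVec b)]
  unfold dotp
  refine Finset.sum_congr rfl fun i _ => ?_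
  congr 1
  have : (fun y => (A y).mulVec b i) = fun y => dotp b (A y i) := by
    funext y
    simp only [Matrix.mulVec, dotProduct, dotp]
    exact Finset.sum_congr rfl fun j _ => mul_comm _ _
  rw [this, pdir_lin w b (fun y => A y i) (hA i)]
  simp only [Matrix.mulVec, dotProduct, pdirM, Matrix.of_apply]
  exact Finset.sum_congr rfl fun j _ => mul_comm _ _

theorem dotp_msym (a b : V3) (A : M3) : dotp a ((msym A).mulVec b) =
    1 / 2 * (dotp a (A.mulVec b) + dotp b (A.mulVec a)) := by
  simp only [dotp, msym, Matrix.mulVec, dotProduct, Fin.sum_univ_three, Matrix.smul_apply,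
    Matrix.add_apply, Matrix.transpose_apply, smul_eq_mul]
  ring

theorem dotp_mcrossv (a b n : V3) (A : M3) : dotp a ((mcrossv A n).mulVec b) =
    dotp a (A.mulVec (cross n b)) := by
  simp only [dotp, mcrossv, cross, Matrix.mulVec, dotProduct, Fin.sum_univ_three, Matrix.of_apply,
    Fin.isValue, show (0 : Fin 3) + 1 = 1 from rfl, show (0 : Fin 3) + 2 = 2 from rfl,
    show (1 : Fin 3) + 1 = 2 from rfl, show (1 : Fin 3) + 2 = 0 from rfl,
    show (2 : Fin 3) + 1 = 0 from rfl, show (2 : Fin 3) + 2 = 1 from rfl]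
  ring

theorem dotp_mcurl (a p q : V3) (τ : V3 → M3) (hτ : DiffM τ) (x : V3) :
    dotp a ((mcurl τ x).mulVec (cross p q)) = pdir p (Fb τ a q) x - pdir q (Fb τ a p) x := by
  rw [← dotp_pdirM _ _ _ _ hτ, ← dotp_pdirM _ _ _ _ hτ]
  simp only [pdirM, pdir_eq_sum]
  simp only [dotp, mcurl, cross, Matrix.mulVec, dotProduct, Fin.sum_univ_three, Matrix.of_apply,
    Fin.isValue, show (0 : Fin 3) + 1 = 1 from rfl, show (0 : Fin 3) + 2 = 2 from rfl,
    show (1 : Fin 3) + 1 = 2 from rfl, show (1 : Fin 3) + 2 = 0 from rfl,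
    show (2 : Fin 3) + 1 = 0 from rfl, show (2 : Fin 3) + 2 = 1 from rfl]
  ring

theorem dotp_vgrad (a b : V3) (v : V3 → V3) (hv : ∀ i, Differentiable ℝ fun y => v y i) (x : V3) :
    dotp a ((vgrad v x).mulVec b) = pdir b (fun y => dotp a (v y)) x := by
  rw [pdir_lin b a v hv]
  unfold dotp
  refine Finset.sum_congr rfl fun i _ => ?_
  rw [pdir_eq_sum]
  simp only [Matrix.mulVec, dotProduct, vgrad, Matrix.of_apply]
  congr 1
  exact Finset.sum_congr rfl fun j _ => mul_comm _ _

theorem dotp_gradS (a : V3) (f : V3 → ℝ) (x : V3) : dotp a (gradS f x) = pdir a f x := by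
  rw [pdir_eq_sum]; rfl

theorem Pm_mulVec (n b : V3) (h : dotp b n = 0) : (Pm n).mulVec b = b := by
  have h' : n ⬝ᵥ b = 0 := by rw [dotProduct_comm]; exact h
  simp [Pm, Matrix.sub_mulVec, Matrix.vecMulVec_mulVec, h']

theorem dotp_Pm_mul (n a b : V3) (A : M3) (h : dotp a n = 0) :
    dotp a ((Pm n * A).mulVec b) = dotp a (A.mulVec b) := by
  have h' : a ⬝ᵥ n = 0 := h
  change a ⬝ᵥ _ = a ⬝ᵥ _
  rw [← Matrix.mulVec_mulVec, Pm, Matrix.sub_mulVec, Matrix.vecMulVec_mulVec]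
  simp [dotProduct_sub, h']

theorem DiffM.Pm_mul {A : V3 → M3} (hA : DiffM A) (n : V3) : DiffM fun y => Pm n * A y := by
  intro i j
  have := fun k => hA k j
  simp only [Matrix.mul_apply]
  fun_prop

theorem dotp_tr2inc (a b n : V3) (τ : V3 → M3) (hτ : DiffM τ) (x : V3)
    (ha : dotp a n = 0) (hb : dotp b n = 0) :
    dotp a ((tr2inc n τ x).mulVec b) =
      pdir b (Fb τ a n) x + pdir a (Fb τ b n) x - pdir n (Fb τ a b) x := by
  have e1 : ∀ c d : V3, dotp c n = 0 → dotp d n = 0 →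
      dotp c ((gradf n (fun y => (Pm n * τ y).mulVec n) x).mulVec d) = pdir d (Fb τ c n) x := by
    intro c d hc hd
    unfold gradf
    rw [← Matrix.mulVec_mulVec, Pm_mulVec n d hd, dotp_vgrad c d _ ((hτ.Pm_mul n).mulVec n)]
    congr 1
    funext y
    exact dotp_Pm_mul n c n (τ y) hc
  have e2 : dotp a ((Pm n * pdirM n τ x * Pm n).mulVec b) = pdir n (Fb τ a b) x := by
    rw [← Matrix.mulVec_mulVec, Pm_mulVec n b hb, dotp_Pm_mul n a b _ ha, dotp_pdirM _ _ _ _ hτ]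
  have e3 : ∀ (A B : M3), dotp a (((2 : ℝ) • A - B).mulVec b) =
      2 * dotp a (A.mulVec b) - dotp a (B.mulVec b) := by
    intro A B
    change a ⬝ᵥ _ = 2 * (a ⬝ᵥ _) - a ⬝ᵥ _
    simp [Matrix.sub_mulVec, Matrix.smul_mulVec, dotProduct_sub]
  unfold tr2inc
  rw [e3, e2, deff, dotp_msym, e1 a b ha hb, e1 b a hb ha]
  ring

theorem smooth_pdir (w : V3) {f : V3 → ℝ} (hf : ContDiff ℝ (⊤ : ℕ∞) f) :
    ContDiff ℝ (⊤ : ℕ∞) (pdir w f) := by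
  unfold pdir
  exact (hf.fderiv_right (m := (⊤ : ℕ∞)) (by simp)).clm_apply contDiff_const

theorem smooth_pd (k : Fin 3) {f : V3 → ℝ} (hf : ContDiff ℝ (⊤ : ℕ∞) f) :
    ContDiff ℝ (⊤ : ℕ∞) (pd k f) := smooth_pdir _ hf

theorem SmoothM.diff {A : V3 → M3} (h : SmoothM A) : DiffM A :=
  fun i j => (h i j).differentiable (by simp)

theorem SmoothM.Fb {A : V3 → M3} (h : SmoothM A) (a b : V3) : ContDiff ℝ (⊤ : ℕ∞) (Fb A a b) := by
  unfold _root_.Fb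
  simp only [dotp, Matrix.mulVec, dotProduct]
  exact ContDiff.sum fun i _ => contDiff_const.mul
    (ContDiff.sum fun j _ => (h i j).mul contDiff_const)

theorem SmoothM.msym {A : V3 → M3} (h : SmoothM A) : SmoothM fun y => msym (A y) := by
  intro i j
  simp only [_root_.msym, Matrix.smul_apply, Matrix.add_apply, Matrix.transpose_apply, smul_eq_mul]
  exact contDiff_const.mul ((h i j).add (h j i))

theorem SmoothM.mcurl {A : V3 → M3} (h : SmoothM A) : SmoothM (mcurl A) := by
  intro i j
  simp only [_root_.mcurl, Matrix.of_apply]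
  exact (smooth_pd _ (h _ _)).sub (smooth_pd _ (h _ _))

theorem SmoothM.mul_const {A : V3 → M3} (h : SmoothM A) (B : M3) : SmoothM fun y => A y * B := by
  intro i j
  simp only [Matrix.mul_apply]
  exact ContDiff.sum fun k _ => (h i k).mul contDiff_const

theorem SmoothM.const_mul {A : V3 → M3} (h : SmoothM A) (B : M3) : SmoothM fun y => B * A y := by
  intro i j
  simp only [Matrix.mul_apply]
  exact ContDiff.sum fun k _ => contDiff_const.mul (h k j)

theorem SmoothM.mcrossv {A : V3 → M3} (h : SmoothM A) (n : V3) :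
    SmoothM fun y => mcrossv (A y) n := by
  intro i j
  simp only [_root_.mcrossv, Matrix.of_apply, cross]
  exact ((h _ _).mul contDiff_const).sub ((h _ _).mul contDiff_const)

theorem SmoothM.tr2inc {A : V3 → M3} (h : SmoothM A) (n : V3) : SmoothM (tr2inc n A) := by
  have h1 : SmoothM (vgrad fun y => (Pm n * A y).mulVec n) := by
    intro i j
    simp only [vgrad, Matrix.of_apply]
    refine smooth_pd _ ?_
    simp only [Matrix.mulVec, dotProduct]
    exact ContDiff.sum fun k _ => ((h.const_mul (Pm n)) i k).mul contDiff_const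
  have h2 : SmoothM (pdirM n A) := fun i j => smooth_pdir _ (h i j)
  have h3 := (h1.mul_const (Pm n)).msym
  have h4 := (h2.const_mul (Pm n)).mul_const (Pm n)
  intro i j
  exact (contDiff_const.mul (h3 i j)).sub (h4 i j)

theorem SmoothM.tr2cott {A : V3 → M3} (h : SmoothM A) (n : V3) : SmoothM (tr2cott n A) :=
  ((h.tr2inc n).mcrossv n).msym

/-- Expansion of a vector in an orthonormal frame. -/
theorem frame_expand (t m n : V3)
    (ht : dotp t t = 1) (hm : dotp m m = 1) (hn : dotp n n = 1)
    (htm : dotp t m = 0) (htn : dotp t n = 0) (hmn : dotp m n = 0) (v : V3) :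
    v = dotp t v • t + dotp m v • m + dotp n v • n := by
  let Q : M3 := Matrix.of ![t, m, n]
  have h1 : Q * Qᵀ = 1 := by
    simp only [dotp, Fin.sum_univ_three] at *
    ext i j
    fin_cases i <;> fin_cases j <;>
      simp [Q, Matrix.mul_apply, Fin.sum_univ_three] <;> linarith
  have h2 : Qᵀ * Q = 1 := mul_eq_one_comm.mp h1
  have h3 : Qᵀ.mulVec (Q.mulVec v) = v := by rw [Matrix.mulVec_mulVec, h2, Matrix.one_mulVec]
  conv_lhs => rw [← h3]
  funext i
  simp [Q, Matrix.mulVec, dotProduct, Fin.sum_univ_three, dotp]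
  ring

/-- Cross products in an orthonormal frame. -/
theorem frame_cross (t m n : V3)
    (ht : dotp t t = 1) (hm : dotp m m = 1) (hn : dotp n n = 1)
    (htm : dotp t m = 0) (htn : dotp t n = 0) (hmn : dotp m n = 0) :
    ∃ s : ℝ, s * s = 1 ∧ cross m n = s • t ∧ cross n t = s • m ∧ cross n m = -s • t := by
  have hc : ∀ a b : V3, cross a b = ![a 1 * b 2 - a 2 * b 1, a 2 * b 0 - a 0 * b 2,
      a 0 * b 1 - a 1 * b 0] := by
    intro a b; funext i; fin_cases i <;> rfl
  have e1 := frame_expand t m n ht hm hn htm htn hmn (cross m n)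
  have e2 := frame_expand t m n ht hm hn htm htn hmn (cross n t)
  have z1 : dotp m (cross m n) = 0 := by simp [hc, dotp, Fin.sum_univ_three]; ring
  have z2 : dotp n (cross m n) = 0 := by simp [hc, dotp, Fin.sum_univ_three]; ring
  have z3 : dotp t (cross n t) = 0 := by simp [hc, dotp, Fin.sum_univ_three]; ring
  have z4 : dotp n (cross n t) = 0 := by simp [hc, dotp, Fin.sum_univ_three]; ring
  have z5 : dotp m (cross n t) = dotp t (cross m n) := by
    simp [hc, dotp, Fin.sum_univ_three]; ring
  have z6 : cross n m = -cross m n := by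
    funext i; fin_cases i <;> simp [hc] <;> ring
  have z7 : dotp (cross m n) (cross m n) = dotp m m * dotp n n - dotp m n * dotp m n := by
    simp [hc, dotp, Fin.sum_univ_three]; ring
  rw [z1, z2, zero_smul, zero_smul, add_zero, add_zero] at e1
  rw [z3, z4, z5, zero_smul, zero_smul, add_zero, zero_add] at e2
  refine ⟨dotp t (cross m n), ?_, e1, e2, ?_⟩
  · generalize dotp t (cross m n) = s at *
    rw [e1, hm, hn, hmn] at z7
    have : dotp (s • t) (s • t) = s * s * dotp t t := by
      simp [dotp, Fin.sum_univ_three]; ring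
    rw [this, ht] at z7
    linarith
  · rw [z6, neg_smul, ← e1]

theorem dotp_mulVec_smul (a b : V3) (A : M3) (s : ℝ) :
    dotp a (A.mulVec (s • b)) = s * dotp a (A.mulVec b) := by
  change a ⬝ᵥ _ = s * (a ⬝ᵥ _)
  simp [Matrix.mulVec_smul]

theorem pdir_comm (a b : V3) {f : V3 → ℝ} (hf : ContDiff ℝ (⊤ : ℕ∞) f) (x : V3) :
    pdir a (pdir b f) x = pdir b (pdir a f) x := by
  have hd : DifferentiableAt ℝ (fderiv ℝ f) x :=
    ((hf.fderiv_right (m := (⊤ : ℕ∞)) (by simp)).differentiable (by simp)) x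
  have key : ∀ u v : V3, pdir u (pdir v f) x = fderiv ℝ (fderiv ℝ f) x u v := by
    intro u v
    unfold pdir
    rw [fderiv_clm_apply hd (differentiableAt_const v)]
    simp
  rw [key, key]
  have hs : IsSymmSndFDerivAt ℝ f x := hf.contDiffAt.isSymmSndFDerivAt (by
    simp only [minSmoothness_of_isRCLikeNormedField]; exact WithTop.coe_le_coe.mpr (le_top : (2 : ℕ∞) ≤ ⊤))
  exact hs a b

/-- edge trace identity
∂_t(tᵀ(tr2cott τ)m) + mᵀ div_f(tr2cott τ) = m·tre2(τ) + ∂_t∂_t(t'ᵀτn). -/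
theorem edge_trace_tr2cott_divf (τ : V3 → M3) (hτ : SmoothM τ) (hsym : ∀ x, (τ x)ᵀ = τ x)
    (t m n : V3)
    (ht : dotp t t = 1) (hm : dotp m m = 1) (hn : dotp n n = 1)
    (htm : dotp t m = 0) (htn : dotp t n = 0) (hmn : dotp m n = 0) :
    ∀ x, pdir t (fun y => dotp t ((tr2cott n τ y).mulVec m)) x
        + dotp m (divfM t m (tr2cott n τ) x) =
      dotp m (tre2 t τ x)
        + pdir t (pdir t fun y => dotp (cross n m) ((τ y).mulVec n)) x := by
  intro x
  obtain ⟨s, hs, c1, c2, c3⟩ := frame_cross t m n ht hm hn htm htn hmn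
  have hd := hτ.diff
  have sF := fun a b => hτ.Fb a b
  have dF : ∀ w a b, Differentiable ℝ (pdir w (Fb τ a b)) := fun w a b =>
    (smooth_pdir w (sF a b)).differentiable (by simp)
  have symF : ∀ a b, Fb τ a b = Fb τ b a := by
    intro a b
    funext y
    have h := hsym y
    change a ⬝ᵥ _ = b ⬝ᵥ _
    conv_lhs => rw [← h]
    rw [Matrix.mulVec_transpose, dotProduct_comm, Matrix.dotProduct_mulVec]
  -- traces in the frame
  have G1 : Fb (tr2cott n τ) t m = fun y => s / 2 *
      ((2 * pdir m (Fb τ m n) y - pdir n (Fb τ m m) y)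
        - (2 * pdir t (Fb τ t n) y - pdir n (Fb τ t t) y)) := by
    funext y
    unfold Fb tr2cott
    rw [dotp_msym, dotp_mcrossv, dotp_mcrossv, c2, c3, dotp_mulVec_smul, dotp_mulVec_smul,
      dotp_tr2inc _ _ _ _ hd _ htn htn, dotp_tr2inc _ _ _ _ hd _ hmn hmn]
    unfold Fb
    ring
  have G2 : Fb (tr2cott n τ) m t = Fb (tr2cott n τ) t m := by
    funext y
    unfold Fb tr2cott
    rw [dotp_msym, dotp_msym]
    ring
  have G3 : Fb (tr2cott n τ) m m = fun y => -s *
      ((pdir t (Fb τ m n) y + pdir m (Fb τ t n) y) - pdir n (Fb τ m t) y) := by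
    funext y
    unfold Fb tr2cott
    rw [dotp_msym, dotp_mcrossv, c3, dotp_mulVec_smul, dotp_tr2inc _ _ _ _ hd _ hmn htn]
    unfold Fb
    ring
  have C1 : ∀ a, Fb (mcurl τ) a t = fun y => s *
      (pdir m (Fb τ a n) y - pdir n (Fb τ a m) y) := by
    intro a
    funext y
    rw [← dotp_mcurl a m n τ hd y, c1, dotp_mulVec_smul, ← mul_assoc, hs, one_mul]
    rfl
  have C2 : Fb (mcurl τ) t m = fun y => s *
      (pdir n (Fb τ t t) y - pdir t (Fb τ t n) y) := by
    funext y
    rw [← dotp_mcurl t n t τ hd y, c2, dotp_mulVec_smul, ← mul_assoc, hs, one_mul]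
    rfl
  have S1 : Fb (fun y => msym (mcurl τ y)) m t = fun y => 1 / 2 *
      (Fb (mcurl τ) m t y + Fb (mcurl τ) t m y) := by
    funext y
    exact dotp_msym _ _ _
  have T1 : (fun y => dotp (cross n m) ((τ y).mulVec n)) = fun y => -s * Fb τ t n y := by
    funext y
    rw [c3]
    change (-s • t) ⬝ᵥ _ = -s * (t ⬝ᵥ _)
    simp
  have T2 : pdir t (fun y => -s * Fb τ t n y) = fun y => -s * pdir t (Fb τ t n) y := by
    funext y
    exact pdir_cmul _ ((sF t n).differentiable (by simp)) y
  have L : dotp m (divfM t m (tr2cott n τ) x) =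
      pdir t (Fb (tr2cott n τ) m t) x + pdir m (Fb (tr2cott n τ) m m) x := by
    rw [← dotp_pdirM _ _ _ _ (hτ.tr2cott n).diff, ← dotp_pdirM _ _ _ _ (hτ.tr2cott n).diff]
    change m ⬝ᵥ _ = m ⬝ᵥ _ + m ⬝ᵥ _
    simp [divfM, dotProduct_add]
  have R : dotp m (tre2 t τ x) =
      2 * pdir t (Fb (fun y => msym (mcurl τ y)) m t) x - pdir m (Fb (mcurl τ) t t) x := by
    rw [← dotp_pdirM _ _ _ _ (hτ.mcurl.msym).diff, ← dotp_gradS]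
    change m ⬝ᵥ _ = 2 * (m ⬝ᵥ _) - m ⬝ᵥ _
    simp only [tre2, dotProduct_sub, dotProduct_smul, smul_eq_mul]
    rfl
  have L0 : (fun y => dotp t ((tr2cott n τ y).mulVec m)) = Fb (tr2cott n τ) t m := rfl
  have dc : ∀ (c : ℝ) {f : V3 → ℝ}, Differentiable ℝ f → Differentiable ℝ fun y => c * f y :=
    fun c f hf => hf.const_mul c
  rw [L0, L, R, T1, T2, S1, C2, C1, C1, G2, G1, G3]
  simp (disch := fun_prop) only [pdir_cmul, pdir_sub, pdir_add]
  rw [pdir_comm m t (sF m n), symF t m]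
  ring

end
end

section
/- Exactness of the polynomial conformal Hessian complex at the div div stage: let k be a natural number. A matrix field τ ∈ P_k(S∩T) satisfies div(div τ) = 0 identically on ℝ³ if and only if there exists σ ∈ P_{k+1}(S∩T) with τ = sym(curl σ). -/
noncomputable section

open Matrix

/-- Real polynomials in three variables. -/
abbrev Q3 := MvPolynomial (Fin 3) ℝ

/-- polynomials of degree strictly less than m -/
def LD (m : ℕ) : Submodule ℝ Q3 := MvPolynomial.restrictSupport ℝ {d | d.degree < m}

/-- scaling of monomials by 1/(degree + c) -/
def Tc (c : ℕ) : Q3 →ₗ[ℝ] Q3 :=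
  (MvPolynomial.basisMonomials (Fin 3) ℝ).constr ℝ
    fun d => MvPolynomial.monomial d (1 / ((d.degree : ℝ) + c))

lemma Tc_monomial (c : ℕ) (d : Fin 3 →₀ ℕ) (a : ℝ) :
    Tc c (MvPolynomial.monomial d a) = MvPolynomial.monomial d (a / ((d.degree : ℝ) + c)) := by
  have h : MvPolynomial.monomial d a = a • MvPolynomial.basisMonomials (Fin 3) ℝ d := by
    simp [MvPolynomial.smul_monomial]
  rw [h, map_smul, Tc, Module.Basis.constr_basis, MvPolynomial.smul_monomial]
  congr 1
  simp [div_eq_mul_inv]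

lemma coeff_Tc (c : ℕ) (d : Fin 3 →₀ ℕ) (p : Q3) :
    MvPolynomial.coeff d (Tc c p) = MvPolynomial.coeff d p / ((d.degree : ℝ) + c) := by
  induction p using MvPolynomial.induction_on' with
  | monomial e a =>
    rw [Tc_monomial, MvPolynomial.coeff_monomial, MvPolynomial.coeff_monomial]
    split_ifs with h
    · rw [h]
    · simp
  | add p q hp hq =>
    rw [map_add, MvPolynomial.coeff_add, MvPolynomial.coeff_add, hp, hq, add_div]

lemma pderiv_comm' (i j : Fin 3) (p : Q3) :
    MvPolynomial.pderiv i (MvPolynomial.pderiv j p)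
      = MvPolynomial.pderiv j (MvPolynomial.pderiv i p) := by
  have h : ⁅(MvPolynomial.pderiv i : Derivation ℝ Q3 Q3),
      (MvPolynomial.pderiv j : Derivation ℝ Q3 Q3)⁆ = 0 := by
    apply MvPolynomial.derivation_ext
    intro k
    simp [Derivation.commutator_apply, MvPolynomial.pderiv_X, Pi.single_apply, apply_ite]
  have := congrArg (fun D : Derivation ℝ Q3 Q3 => D p) h
  simpa [Derivation.commutator_apply, sub_eq_zero] using this

lemma Tc_pderiv (c : ℕ) (i : Fin 3) (p : Q3) :
    MvPolynomial.pderiv i (Tc c p) = Tc (c + 1) (MvPolynomial.pderiv i p) := by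
  ext d
  rw [MvPolynomial.coeff_pderiv, coeff_Tc, coeff_Tc, MvPolynomial.coeff_pderiv]
  simp only [map_add, Finsupp.degree_single]
  push_cast
  ring

lemma Tc_euler (p : Q3) :
    2 * Tc 2 p + ∑ i, MvPolynomial.X i * MvPolynomial.pderiv i (Tc 2 p) = p := by
  induction p using MvPolynomial.induction_on' with
  | monomial d a =>
    rw [Tc_monomial]
    simp_rw [MvPolynomial.X_mul_pderiv_monomial]
    rw [← Finset.sum_smul, ← Finsupp.degree_eq_sum, show (2 : Q3) = ((2 : ℕ) : Q3) by norm_num,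
      ← nsmul_eq_mul, ← add_smul, MvPolynomial.smul_monomial]
    congr 1
    have : (d.degree : ℝ) + 2 ≠ 0 := by positivity
    simp only [nsmul_eq_mul]
    push_cast
    field_simp
    ring
  | add p q hp hq =>
    conv_rhs => rw [← hp, ← hq]
    simp only [map_add, mul_add, Finset.sum_add_distrib]
    ring

lemma mem_LD {m : ℕ} {p : Q3} :
    p ∈ LD m ↔ ∀ d, MvPolynomial.coeff d p ≠ 0 → d.degree < m := by
  rw [LD, MvPolynomial.mem_restrictSupport_iff]
  simp [Set.subset_def]

lemma LD_Tc {m c : ℕ} {p : Q3} (h : p ∈ LD m) : Tc c p ∈ LD m := by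
  rw [mem_LD] at h ⊢
  intro d hd
  apply h
  intro h0
  apply hd
  rw [coeff_Tc, h0, zero_div]

lemma LD_pderiv {m : ℕ} {p : Q3} (i : Fin 3) (h : p ∈ LD (m + 1)) :
    MvPolynomial.pderiv i p ∈ LD m := by
  rw [mem_LD] at h ⊢
  intro d hd
  rw [MvPolynomial.coeff_pderiv] at hd
  have := h _ (left_ne_zero_of_mul hd)
  simp only [map_add, Finsupp.degree_single] at this
  omega

lemma LD_mul_X {m : ℕ} {p : Q3} (i : Fin 3) (h : p ∈ LD m) :
    p * MvPolynomial.X i ∈ LD (m + 1) := by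
  rw [mem_LD] at h ⊢
  intro d hd
  rw [MvPolynomial.coeff_mul_X'] at hd
  split_ifs at hd with hi
  · have h1 := h _ hd
    have h2 : d = (d - Finsupp.single i 1) + Finsupp.single i 1 := by
      rw [tsub_add_cancel_of_le]
      rw [Finsupp.single_le_iff]
      exact Nat.one_le_iff_ne_zero.mpr (Finsupp.mem_support_iff.mp hi)
    rw [h2]
    simp only [map_add, Finsupp.degree_single]
    omega
  · exact absurd rfl hd

lemma mem_LD_iff {m : ℕ} {p : Q3} : p ∈ LD (m + 1) ↔ p.totalDegree ≤ m := by
  rw [mem_LD, MvPolynomial.totalDegree, Finset.sup_le_iff]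
  simp [Nat.lt_succ_iff, Finsupp.degree_eq_sum, Finsupp.sum_fintype]

/-- polynomial de Rham exactness at div -/
lemma poly_div_curl {m : ℕ} (v : Fin 3 → Q3) (hv : ∀ i, v i ∈ LD m)
    (hd : ∑ i, MvPolynomial.pderiv i (v i) = 0) :
    ∃ w : Fin 3 → Q3, (∀ i, w i ∈ LD (m + 1)) ∧
      ∀ i, v i = MvPolynomial.pderiv (i + 1) (w (i + 2))
        - MvPolynomial.pderiv (i + 2) (w (i + 1)) := by
  have hu : ∑ i, MvPolynomial.pderiv i (Tc 2 (v i)) = 0 := by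
    simp_rw [Tc_pderiv, ← map_sum, hd, map_zero]
  refine ⟨fun i => Tc 2 (v (i + 1)) * MvPolynomial.X (i + 2)
    - Tc 2 (v (i + 2)) * MvPolynomial.X (i + 1), fun i => ?_, fun i => ?_⟩
  · exact Submodule.sub_mem _ (LD_mul_X _ (LD_Tc (hv _))) (LD_mul_X _ (LD_Tc (hv _)))
  · have he := Tc_euler (v i)
    rw [Fin.sum_univ_three] at hu he
    conv_lhs => rw [← he]
    fin_cases i
    all_goals
      simp [Derivation.leibniz, MvPolynomial.pderiv_X, Pi.single_apply] at hu ⊢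
    · linear_combination MvPolynomial.X 0 * hu
    · linear_combination MvPolynomial.X 1 * hu
    · linear_combination MvPolynomial.X 2 * hu

set_option maxHeartbeats 1000000 in
lemma poly_backward (k : ℕ) (t : Fin 3 → Fin 3 → Q3) (ht : ∀ i j, t i j ∈ LD (k + 1))
    (hs : ∀ i j, t i j = t j i) (htr : t 0 0 + t 1 1 + t 2 2 = 0)
    (hd : ∑ i, MvPolynomial.pderiv i (∑ j, MvPolynomial.pderiv j (t i j)) = 0) :
    ∃ s : Fin 3 → Fin 3 → Q3, (∀ i j, s i j ∈ LD (k + 2)) ∧ (∀ i j, s i j = s j i) ∧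
      s 0 0 + s 1 1 + s 2 2 = 0 ∧ ∀ i j, 2 * t i j =
        (MvPolynomial.pderiv (j + 1) (s i (j + 2)) - MvPolynomial.pderiv (j + 2) (s i (j + 1)))
        + (MvPolynomial.pderiv (i + 1) (s j (i + 2))
          - MvPolynomial.pderiv (i + 2) (s j (i + 1))) := by
  obtain ⟨w, hwL, hw⟩ := poly_div_curl (m := k)
    (fun i => ∑ j, MvPolynomial.pderiv j (t i j))
    (fun i => Submodule.sum_mem _ fun j _ => LD_pderiv j (ht i j)) hd
  have e0 := hw 0
  have e1 := hw 1
  have e2 := hw 2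
  simp only [Fin.sum_univ_three, Fin.isValue, Fin.reduceAdd, zero_add] at e0 e1 e2
  obtain ⟨A, hA⟩ : ∃ A : Fin 3 → Fin 3 → Q3, A = ![![t 0 0, t 0 1 - w 2, t 0 2 + w 1],
    ![t 1 0 + w 2, t 1 1, t 1 2 - w 0], ![t 2 0 - w 1, t 2 1 + w 0, t 2 2]] := ⟨_, rfl⟩
  have hAL : ∀ i j, A i j ∈ LD (k + 1) := by
    intro i j
    subst hA
    fin_cases i <;> fin_cases j
    · exact ht 0 0
    · exact Submodule.sub_mem _ (ht 0 1) (hwL 2)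
    · exact Submodule.add_mem _ (ht 0 2) (hwL 1)
    · exact Submodule.add_mem _ (ht 1 0) (hwL 2)
    · exact ht 1 1
    · exact Submodule.sub_mem _ (ht 1 2) (hwL 0)
    · exact Submodule.sub_mem _ (ht 2 0) (hwL 1)
    · exact Submodule.add_mem _ (ht 2 1) (hwL 0)
    · exact ht 2 2
  have hAd : ∀ i, ∑ j, MvPolynomial.pderiv j (A i j) = 0 := by
    intro i
    subst hA
    rw [Fin.sum_univ_three]
    fin_cases i <;> simp
    · linear_combination e0
    · linear_combination e1
    · linear_combination e2
  choose r hrL hr using fun i => poly_div_curl (A i) (hAL i) (hAd i)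
  have hr' := fun i => And.intro (hr i 0) (And.intro (hr i 1) (hr i 2))
  have r0 := hr' 0
  have r1 := hr' 1
  have r2 := hr' 2
  subst hA
  simp at r0 r1 r2
  obtain ⟨r00, r01, r02⟩ := r0
  obtain ⟨r10, r11, r12⟩ := r1
  obtain ⟨r20, r21, r22⟩ := r2
  obtain ⟨v, hvL, hv⟩ := poly_div_curl (m := k + 2)
    (fun m => r (m + 2) (m + 1) - r (m + 1) (m + 2))
    (fun m => Submodule.sub_mem _ (hrL _ _) (hrL _ _)) (by
      rw [Fin.sum_univ_three]
      simp
      linear_combination htr - r00 - r11 - r22)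
  have v0 := hv 0
  have v1 := hv 1
  have v2 := hv 2
  simp at v0 v1 v2
  obtain ⟨q, hqL, hq⟩ : ∃ q : Q3, q ∈ LD (k + 2) ∧ 3 * q =
      ∑ i, (r i i - MvPolynomial.pderiv i (v i)) := by
    refine ⟨(1 / 3 : ℝ) • ∑ i, (r i i - MvPolynomial.pderiv i (v i)),
      Submodule.smul_mem _ _ (Submodule.sum_mem _ fun i _ =>
        Submodule.sub_mem _ (hrL _ _) (LD_pderiv _ (hvL _))), ?_⟩
    rw [show (3 : Q3) = ((3 : ℕ) : Q3) by norm_num, ← nsmul_eq_mul, ← Nat.cast_smul_eq_nsmul ℝ, smul_smul]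
    norm_num
  rw [Fin.sum_univ_three] at hq
  have s01 := hs 0 1
  have s02 := hs 0 2
  have s12 := hs 1 2
  refine ⟨fun i j => r i j - MvPolynomial.pderiv j (v i) - if i = j then q else 0,
    fun i j => ?_, fun i j => ?_, ?_, fun i j => ?_⟩
  · refine Submodule.sub_mem _ (Submodule.sub_mem _ (hrL _ _) (LD_pderiv _ (hvL _))) ?_
    split_ifs
    · exact hqL
    · exact Submodule.zero_mem _
  · fin_cases i <;> fin_cases j <;> simp
    · linear_combination -v2
    · linear_combination v1
    · linear_combination v2
    · linear_combination -v0
    · linear_combination -v1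
    · linear_combination v0
  · simp
    linear_combination -hq
  · have c1 := fun p => pderiv_comm' 1 0 p
    have c2 := fun p => pderiv_comm' 2 0 p
    have c3 := fun p => pderiv_comm' 2 1 p
    fin_cases i <;> fin_cases j <;> simp [c1, c2, c3]
    · linear_combination 2 * r00
    · linear_combination r01 + r10 + s01
    · linear_combination r02 + r20 + s02
    · linear_combination r01 + r10 - s01
    · linear_combination 2 * r11
    · linear_combination r12 + r21 + s12
    · linear_combination r02 + r20 - s02
    · linear_combination r12 + r21 - s12
    · linear_combination 2 * r22

lemma poly_forward (t s : Fin 3 → Fin 3 → Q3)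
    (h : ∀ i j, 2 * t i j =
        (MvPolynomial.pderiv (j + 1) (s i (j + 2)) - MvPolynomial.pderiv (j + 2) (s i (j + 1)))
        + (MvPolynomial.pderiv (i + 1) (s j (i + 2))
          - MvPolynomial.pderiv (i + 2) (s j (i + 1)))) :
    ∑ i, MvPolynomial.pderiv i (∑ j, MvPolynomial.pderiv j (t i j)) = 0 := by
  have h2 : 2 * ∑ i, MvPolynomial.pderiv i (∑ j, MvPolynomial.pderiv j (t i j)) =
      ∑ i, MvPolynomial.pderiv i (∑ j, MvPolynomial.pderiv j (2 * t i j)) := by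
    simp only [two_mul, map_add, Finset.sum_add_distrib]
  have c1 := fun p => pderiv_comm' 1 0 p
  have c2 := fun p => pderiv_comm' 2 0 p
  have c3 := fun p => pderiv_comm' 2 1 p
  simp_rw [h] at h2
  have h3 : (2 : Q3) * ∑ i, MvPolynomial.pderiv i (∑ j, MvPolynomial.pderiv j (t i j)) = 0 := by
    rw [h2]
    simp [Fin.sum_univ_three, c1, c2, c3]
    ring
  simpa using h3

lemma hasFDerivAt_eval (p : Q3) (x : V3) :
    HasFDerivAt (fun y : V3 => MvPolynomial.eval y p)
      (∑ i, MvPolynomial.eval x (MvPolynomial.pderiv i p) •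
        (ContinuousLinearMap.proj i : V3 →L[ℝ] ℝ)) x := by
  induction p using MvPolynomial.induction_on with
  | C a => simpa using hasFDerivAt_const a x
  | add p q hp hq =>
    simp only [map_add]
    refine (hp.add hq).congr_fderiv ?_
    simp [add_smul, Finset.sum_add_distrib]
  | mul_X p n hp =>
    have h := hp.mul (ContinuousLinearMap.proj (R := ℝ) (φ := fun _ : Fin 3 => ℝ) n).hasFDerivAt
    simp only [map_mul, MvPolynomial.eval_X]
    refine h.congr_fderiv ?_
    ext j
    simp [Derivation.leibniz, MvPolynomial.pderiv_X, Pi.single_apply]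
    simp [apply_ite, add_mul, Finset.sum_add_distrib, Finset.mul_sum, mul_assoc]

lemma pd_eval (i : Fin 3) (p : Q3) (x : V3) :
    pd i (fun y => MvPolynomial.eval y p) x = MvPolynomial.eval x (MvPolynomial.pderiv i p) := by
  rw [pd, (hasFDerivAt_eval p x).fderiv]
  simp [Pi.single_apply]

lemma vdiv_mdiv_eval (t : Fin 3 → Fin 3 → Q3) (x : V3) :
    vdiv (mdiv fun x => Matrix.of fun i j => MvPolynomial.eval x (t i j)) x
      = MvPolynomial.eval x
        (∑ i, MvPolynomial.pderiv i (∑ j, MvPolynomial.pderiv j (t i j))) := by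
  simp only [vdiv, mdiv, Matrix.of_apply, pd_eval, ← map_sum]

lemma msym_mcurl_eval (s : Fin 3 → Fin 3 → Q3) (x : V3) (i j : Fin 3) :
    2 * msym (mcurl (fun x => Matrix.of fun i j => MvPolynomial.eval x (s i j)) x) i j
      = MvPolynomial.eval x
        ((MvPolynomial.pderiv (j + 1) (s i (j + 2)) - MvPolynomial.pderiv (j + 2) (s i (j + 1)))
        + (MvPolynomial.pderiv (i + 1) (s j (i + 2))
          - MvPolynomial.pderiv (i + 2) (s j (i + 1)))) := by
  simp only [msym, mcurl, Matrix.of_apply, pd_eval, Matrix.smul_apply, Matrix.add_apply,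
    Matrix.transpose_apply, map_add, map_sub, smul_eq_mul]
  ring

lemma polyLeST_rep {k : ℕ} {τ : V3 → M3} (h : PolyLeST k τ) :
    ∃ t : Fin 3 → Fin 3 → Q3, (∀ i j, t i j ∈ LD (k + 1)) ∧ (∀ i j, t i j = t j i) ∧
      t 0 0 + t 1 1 + t 2 2 = 0 ∧
      τ = fun x => Matrix.of fun i j => MvPolynomial.eval x (t i j) := by
  obtain ⟨h1, h2, h3⟩ := h
  choose t htd ht using h1
  refine ⟨t, fun i j => mem_LD_iff.2 (htd i j), fun i j => ?_, ?_, ?_⟩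
  · apply MvPolynomial.funext
    intro x
    rw [← ht, ← ht]
    exact congrFun (congrFun (h2 x) j) i
  · apply MvPolynomial.funext
    intro x
    have := h3 x
    rw [Matrix.trace_fin_three] at this
    simp only [map_add, map_zero, ← ht]
    exact this
  · funext x
    ext i j
    exact ht i j x

/-- exactness of the polynomial conformal Hessian complex at the div div stage. -/
theorem poly_conformal_hessian_exact_divdiv (k : ℕ) (τ : V3 → M3) (hτ : PolyLeST k τ) :
    (∀ x, vdiv (mdiv τ) x = 0) ↔
      ∃ σ : V3 → M3, PolyLeST (k + 1) σ ∧ ∀ x, τ x = msym (mcurl σ x) := by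
  obtain ⟨t, htL, hts, htt, rfl⟩ := polyLeST_rep hτ
  simp only [vdiv_mdiv_eval]
  constructor
  · intro h
    have hd : ∑ i, MvPolynomial.pderiv i (∑ j, MvPolynomial.pderiv j (t i j)) = 0 :=
      MvPolynomial.funext fun x => by rw [h x, map_zero]
    obtain ⟨s, hsL, hss, hst, hs⟩ := poly_backward k t htL hts htt hd
    refine ⟨fun x => Matrix.of fun i j => MvPolynomial.eval x (s i j),
      ⟨fun i j => ⟨s i j, mem_LD_iff.1 (hsL i j), fun x => rfl⟩, fun x => ?_, fun x => ?_⟩,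
      fun x => ?_⟩
    · ext i j
      simp [hss i j]
    · rw [Matrix.trace_fin_three]
      simp only [Matrix.of_apply, ← map_add, hst, map_zero]
    · ext i j
      have h1 := msym_mcurl_eval s x i j
      rw [← hs, map_mul] at h1
      simp only [map_ofNat] at h1
      simp only [Matrix.of_apply]
      linarith
  · rintro ⟨σ, hσ, hts'⟩ x
    obtain ⟨s, -, -, -, rfl⟩ := polyLeST_rep hσ
    rw [poly_forward t s, map_zero]
    intro i j
    apply MvPolynomial.funext
    intro y
    rw [← msym_mcurl_eval s y i j, ← hts' y, map_mul]
    simp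

end
end
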